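/- arXiv:1609.06902 — 3 statements merged into one kernel-verified Lean document; each statement's English description precedes it below -/
import Mathlib

section
/- Let E be a field. Let (D, φ, L) and (D′, φ′, L′) be two triples, where D and D′ are two-dimensional E-vector spaces, φ : D → D and φ′ : D′ → D′ are E-linear endomorphisms, and L ⊆ D and L′ ⊆ D′ are one-dimensional subspaces not stable under φ and φ′ respectively. If trace φ = trace φ′ and det φ = det φ′, then there exists an E-linear isomorphism ψ : D → D′ such that ψ ∘ φ = φ′ ∘ ψ and ψ(L) = L′. -/
theorem cyclic_basis_aux {E D : Type*} [Field E] [AddCommGroup D] [Module E D]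
    (hD : Module.finrank E D = 2) (φ : D →ₗ[E] D) (L : Submodule E D)
    (hL : Module.finrank E L = 1) (hstab : ¬ L.map φ ≤ L) :
    ∃ b : Module.Basis (Fin 2) E D, φ (b 0) = b 1 ∧
      φ (b 1) = (-LinearMap.det φ) • b 0 + (LinearMap.trace E D φ) • b 1 ∧
      L = Submodule.span E {b 0} := by
  obtain ⟨⟨v, hvL⟩, hv0, hv⟩ := finrank_eq_one_iff'.1 hL
  have hspan : L = Submodule.span E {v} := by
    ext x
    rw [Submodule.mem_span_singleton]
    constructor
    · intro hx
      obtain ⟨c, hc⟩ := hv ⟨x, hx⟩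
      exact ⟨c, congrArg Subtype.val hc⟩
    · rintro ⟨c, rfl⟩
      exact L.smul_mem c hvL
  have hv0' : v ≠ 0 := fun h => hv0 (Subtype.ext h)
  have hφ : φ v ∉ L := by
    intro h
    apply hstab
    rw [Submodule.map_le_iff_le_comap]
    intro x hx
    rw [hspan, Submodule.mem_span_singleton] at hx
    obtain ⟨c, rfl⟩ := hx
    rw [Submodule.mem_comap, map_smul]
    exact L.smul_mem c h
  have hli : LinearIndependent E ![v, φ v] := by
    rw [LinearIndependent.pair_iff' hv0']
    intro a ha
    exact hφ (ha ▸ L.smul_mem a hvL)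
  let b := basisOfLinearIndependentOfCardEqFinrank hli (by simp [hD])
  have hb0 : b 0 = v := by simp [b]
  have hb1 : b 1 = φ v := by simp [b]
  have h01 : φ (b 0) = b 1 := by rw [hb0, hb1]
  refine ⟨b, h01, ?_, by rw [hb0, hspan]⟩
  have h := b.sum_repr (φ (b 1))
  rw [← LinearMap.det_toMatrix b, LinearMap.trace_eq_matrix_trace E b, Matrix.det_fin_two,
    Matrix.trace_fin_two]
  simp only [LinearMap.toMatrix_apply, h01, Module.Basis.repr_self]
  rw [Fin.sum_univ_two] at h
  simpa using h.symm

/-- Two triples `(D, φ, L)` and `(D', φ', L')`, each consisting of a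
two-dimensional `E`-vector space, an endomorphism, and a one-dimensional
subspace not stable under the endomorphism, are isomorphic (by an isomorphism
intertwining the endomorphisms and matching the marked lines) as soon as the
traces and determinants of the endomorphisms agree. -/
theorem stmt_2 {E D D' : Type*} [Field E]
    [AddCommGroup D] [Module E D] [AddCommGroup D'] [Module E D']
    (hD : Module.finrank E D = 2) (hD' : Module.finrank E D' = 2)
    (φ : D →ₗ[E] D) (φ' : D' →ₗ[E] D')
    (L : Submodule E D) (L' : Submodule E D')
    (hL : Module.finrank E L = 1) (hL' : Module.finrank E L' = 1)
    (hstab : ¬ L.map φ ≤ L) (hstab' : ¬ L'.map φ' ≤ L')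
    (htr : LinearMap.trace E D φ = LinearMap.trace E D' φ')
    (hdet : LinearMap.det φ = LinearMap.det φ') :
    ∃ ψ : D ≃ₗ[E] D', (∀ x : D, ψ (φ x) = φ' (ψ x)) ∧
      L.map (ψ : D →ₗ[E] D') = L' := by
  obtain ⟨b, h0, h1, hb⟩ := cyclic_basis_aux hD φ L hL hstab
  obtain ⟨b', h0', h1', hb'⟩ := cyclic_basis_aux hD' φ' L' hL' hstab'
  let ψ := b.equiv b' (Equiv.refl _)
  have hψ : ∀ i, ψ (b i) = b' i := fun i => by simp [ψ]
  refine ⟨ψ, ?_, ?_⟩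
  · have : (ψ : D →ₗ[E] D') ∘ₗ φ = φ' ∘ₗ (ψ : D →ₗ[E] D') := by
      apply b.ext
      intro i
      fin_cases i
      · simp [hψ, h0, h0']
      · simp [hψ, h1, h1', htr, hdet]
    exact fun x => LinearMap.congr_fun this x
  · rw [hb, hb', Submodule.map_span, Set.image_singleton]
    simp [hψ]
end

section
/- Let R be a commutative ring, ϖ ∈ R, and let f : M → N be an injective homomorphism of R-modules. Assume: (i) N has no ϖ-torsion, i.e. ϖ·n = 0 implies n = 0 for n ∈ N; (ii) the induced map M/ϖM → N/ϖN is bijective; (iii) for every n ∈ N there exists a natural number k such that ϖ^k·n lies in the image of f. Then f is an isomorphism. -/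
open Pointwise

/-- Let `R` be a commutative ring, `ϖ ∈ R`, and `f : M → N` an injective map of
`R`-modules.  If `N` has no `ϖ`-torsion, the induced map `M/ϖM → N/ϖN` is
bijective, and the cokernel of `f` is killed by powers of `ϖ` (every element of
`N` has a `ϖ`-power multiple in the image of `f`), then `f` is an
isomorphism. -/
theorem stmt_5 {R M N : Type*} [CommRing R]
    [AddCommGroup M] [Module R M] [AddCommGroup N] [Module R N]
    (ϖ : R) (f : M →ₗ[R] N)
    (hinj : Function.Injective f)
    (htors : ∀ n : N, ϖ • n = 0 → n = 0)
    (hmod : Function.Bijective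
      (Submodule.mapQ (ϖ • (⊤ : Submodule R M)) (ϖ • (⊤ : Submodule R N)) f
        (by
          intro x hx
          rw [← SetLike.mem_coe, Submodule.coe_pointwise_smul] at hx
          obtain ⟨m, -, rfl⟩ := hx
          rw [Submodule.mem_comap, map_smul, ← SetLike.mem_coe,
            Submodule.coe_pointwise_smul]
          exact Set.smul_mem_smul_set (Set.mem_univ _))))
    (hcok : ∀ n : N, ∃ k : ℕ, ϖ ^ k • n ∈ LinearMap.range f) :
    Function.Bijective f := by
  have key : ∀ n : N, ϖ • n ∈ LinearMap.range f → n ∈ LinearMap.range f := by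
    rintro n ⟨m, hm⟩
    have hm0 : (Submodule.Quotient.mk m : M ⧸ (ϖ • (⊤ : Submodule R M))) = 0 := by
      apply hmod.1
      rw [map_zero]
      change (Submodule.Quotient.mk (f m) : N ⧸ (ϖ • (⊤ : Submodule R N))) = 0
      rw [Submodule.Quotient.mk_eq_zero, hm]
      exact Submodule.smul_mem_pointwise_smul n ϖ ⊤ Submodule.mem_top
    rw [Submodule.Quotient.mk_eq_zero, ← SetLike.mem_coe,
      Submodule.coe_pointwise_smul] at hm0
    obtain ⟨m', -, rfl⟩ := hm0
    refine ⟨m', (sub_eq_zero.mp (htors (n - f m') ?_)).symm⟩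
    rw [smul_sub, ← map_smul, ← hm]
    exact sub_self _
  refine ⟨hinj, fun n => ?_⟩
  obtain ⟨k, hk⟩ := hcok n
  have main : ∀ k : ℕ, ϖ ^ k • n ∈ LinearMap.range f → n ∈ LinearMap.range f := by
    intro k
    induction k with
    | zero => intro h; simpa using h
    | succ k ih =>
      intro h
      apply ih
      apply key
      rwa [smul_smul, ← pow_succ']
  exact main k hk
end

section
/- Let p be an odd prime. Let I₁ be the subgroup of GL₂(ℤ_p) consisting of matrices g whose reduction modulo p is upper triangular unipotent (i.e. the reductions of the diagonal entries of g are 1 and the reduction of the lower-left entry of g is 0). Let Z₁ be the subgroup of I₁ consisting of the scalar matrices λ·Id with λ ∈ ℤ_pˣ and λ ≡ 1 mod p (a central, hence normal, subgroup of I₁), and let Γ = {u ∈ ℤ_pˣ : u ≡ 1 mod p}. Then det(g) ∈ Γ for every g ∈ I₁, and the map g ↦ (g·Z₁, (det g)⁻¹) is a group isomorphism from I₁ onto the direct product (I₁/Z₁) × Γ. -/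
open Matrix

theorem aux_isUnit (p : ℕ) [Fact p.Prime] (x : ℤ_[p]) (h : PadicInt.toZMod x ≠ 0) : IsUnit x := by
  by_contra hx
  apply h
  have : x ∈ IsLocalRing.maximalIdeal ℤ_[p] := (IsLocalRing.mem_maximalIdeal x).2 hx
  rwa [← PadicInt.ker_toZMod, RingHom.mem_ker] at this

theorem aux_two (p : ℕ) [Fact p.Prime] (hp : Odd p) : (2 : ZMod p) ≠ 0 := by
  intro h
  have h2 : ((2 : ℕ) : ZMod p) = 0 := by exact_mod_cast h
  rw [ZMod.natCast_eq_zero_iff] at h2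
  have h3 := (Fact.out : p.Prime).two_le
  have h4 := Nat.le_of_dvd (by norm_num) h2
  have h5 : p = 2 := by omega
  subst h5
  exact absurd hp (by decide)

theorem aux_inj (p : ℕ) [Fact p.Prime] (hp : Odd p) (u : ℤ_[p])
    (hu : PadicInt.toZMod u = 1) (h : u * u = 1) : u = 1 := by
  have h1 : IsUnit (u + 1) := by
    apply aux_isUnit
    rw [map_add, hu, map_one, one_add_one_eq_two]
    exact aux_two p hp
  have h2 : (u + 1) * (u - 1) = 0 := by linear_combination h
  have h3 := (h1.mul_right_eq_zero).1 h2
  linear_combination h3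

theorem aux_surj (p : ℕ) [Fact p.Prime] (hp : Odd p) (u : ℤ_[p]ˣ)
    (hu : PadicInt.toZMod (u : ℤ_[p]) = 1) :
    ∃ v : ℤ_[p]ˣ, PadicInt.toZMod (v : ℤ_[p]) = 1 ∧ v * v = u := by
  obtain ⟨a, ha, ha'⟩ := HenselianRing.is_henselian
    (I := IsLocalRing.maximalIdeal ℤ_[p])
    (Polynomial.X ^ 2 - Polynomial.C (u : ℤ_[p])) (Polynomial.monic_X_pow_sub_C _ two_ne_zero) 1
    (by
      rw [← PadicInt.ker_toZMod, RingHom.mem_ker]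
      simp [hu])
    (by
      apply IsUnit.map
      apply aux_isUnit
      have h2 : PadicInt.toZMod (2 : ℤ_[p]) = 2 := map_ofNat _ 2
      simpa [h2, one_add_one_eq_two] using aux_two p hp)
  rw [← PadicInt.ker_toZMod, RingHom.mem_ker, map_sub, map_one, sub_eq_zero] at ha'
  have ha2 : a * a = u := by
    have : a ^ 2 - (u : ℤ_[p]) = 0 := by simpa [Polynomial.IsRoot] using ha
    linear_combination this
  have hau : IsUnit a := aux_isUnit p a (by rw [ha']; exact one_ne_zero)
  obtain ⟨v, rfl⟩ := hau
  exact ⟨v, ha', Units.ext (by simpa using ha2)⟩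

/-- Let `p` be an odd prime, `I₁` the subgroup of `GL₂(ℤ_p)` of matrices that
are upper triangular unipotent modulo `p`, `Z₁` its subgroup of scalar matrices
`λ·Id` with `λ ≡ 1 mod p` (a central, hence normal, subgroup), and
`Γ = {u ∈ ℤ_pˣ : u ≡ 1 mod p}`.  Then `det g ∈ Γ` for all `g ∈ I₁`, and
`g ↦ (g·Z₁, (det g)⁻¹)` is a group isomorphism `I₁ ≅ (I₁/Z₁) × Γ`. -/
theorem stmt_7 (p : ℕ) [Fact p.Prime] (hp : Odd p)
    (I₁ : Subgroup (GL (Fin 2) ℤ_[p]))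
    (hI₁ : ∀ g : GL (Fin 2) ℤ_[p], g ∈ I₁ ↔
      (PadicInt.toZMod (g 0 0) = 1 ∧ PadicInt.toZMod (g 1 1) = 1 ∧
        PadicInt.toZMod (g 1 0) = 0))
    (Z₁ : Subgroup I₁) [Z₁.Normal]
    (hZ₁ : ∀ g : I₁, g ∈ Z₁ ↔
      ∃ u : ℤ_[p]ˣ, PadicInt.toZMod (u : ℤ_[p]) = 1 ∧
        ((g : GL (Fin 2) ℤ_[p]) : Matrix (Fin 2) (Fin 2) ℤ_[p]) =
          (u : ℤ_[p]) • (1 : Matrix (Fin 2) (Fin 2) ℤ_[p]))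
    (Γ : Subgroup ℤ_[p]ˣ)
    (hΓ : ∀ u : ℤ_[p]ˣ, u ∈ Γ ↔ PadicInt.toZMod (u : ℤ_[p]) = 1) :
    (∀ g : GL (Fin 2) ℤ_[p], g ∈ I₁ → Matrix.GeneralLinearGroup.det g ∈ Γ) ∧
    ∃ e : I₁ ≃* (I₁ ⧸ Z₁) × Γ, ∀ g : I₁,
      (e g).1 = QuotientGroup.mk g ∧
      ((e g).2 : ℤ_[p]ˣ) =
        (Matrix.GeneralLinearGroup.det (g : GL (Fin 2) ℤ_[p]))⁻¹ := by
  have hdet : ∀ g : GL (Fin 2) ℤ_[p], g ∈ I₁ → Matrix.GeneralLinearGroup.det g ∈ Γ := by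
    intro g hg
    obtain ⟨h0, h1, h2⟩ := (hI₁ g).1 hg
    rw [hΓ]
    change PadicInt.toZMod (Matrix.det (g : Matrix (Fin 2) (Fin 2) ℤ_[p])) = 1
    rw [Matrix.det_fin_two, map_sub, map_mul, map_mul, h0, h1, h2]
    simp
  refine ⟨hdet, ?_⟩
  let f : I₁ →* (I₁ ⧸ Z₁) × Γ :=
    { toFun := fun g => (QuotientGroup.mk g,
        ⟨(Matrix.GeneralLinearGroup.det (g : GL (Fin 2) ℤ_[p]))⁻¹, Γ.inv_mem (hdet g g.2)⟩)
      map_one' := by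
        ext1
        · rfl
        · apply Subtype.ext
          simp
      map_mul' := by
        intro a b
        ext1
        · rfl
        · apply Subtype.ext
          simp [mul_comm] }
  have hinj : Function.Injective f := by
    rw [injective_iff_map_eq_one]
    intro g hg
    have h1 : (QuotientGroup.mk g : I₁ ⧸ Z₁) = 1 := congrArg Prod.fst hg
    have h2 : (Matrix.GeneralLinearGroup.det (g : GL (Fin 2) ℤ_[p]))⁻¹ = 1 :=
      congrArg (fun x => (x.2 : ℤ_[p]ˣ)) hg
    rw [QuotientGroup.eq_one_iff, hZ₁] at h1
    obtain ⟨u, hu, hgu⟩ := h1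
    have h3 : Matrix.det ((g : GL (Fin 2) ℤ_[p]) : Matrix (Fin 2) (Fin 2) ℤ_[p]) = 1 :=
      congrArg Units.val (inv_eq_one.1 h2)
    have h4 : (u : ℤ_[p]) * u = 1 := by
      rw [hgu, Matrix.det_smul] at h3
      simpa [sq] using h3
    have h5 := aux_inj p hp u hu h4
    apply Subtype.ext
    apply Units.ext
    rw [hgu, h5, one_smul]
    rfl
  have hsurj : Function.Surjective f := by
    rintro ⟨q, γ⟩
    obtain ⟨h, rfl⟩ := QuotientGroup.mk_surjective q
    have hm : (Matrix.GeneralLinearGroup.det (h : GL (Fin 2) ℤ_[p]))⁻¹ * (γ : ℤ_[p]ˣ)⁻¹ ∈ Γ :=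
      Γ.mul_mem (Γ.inv_mem (hdet h h.2)) (Γ.inv_mem γ.2)
    obtain ⟨v, hv, hvv⟩ := aux_surj p hp _ ((hΓ _).1 hm)
    let s : GL (Fin 2) ℤ_[p] := Units.map (Matrix.scalar (Fin 2)).toMonoidHom v
    have hs : (s : Matrix (Fin 2) (Fin 2) ℤ_[p]) = (v : ℤ_[p]) • 1 := by
      change Matrix.scalar (Fin 2) (v : ℤ_[p]) = _
      rw [Matrix.scalar_apply, Matrix.smul_one_eq_diagonal]
    have hsI : s ∈ I₁ := by
      rw [hI₁, hs]
      simp [hv]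
    have hsd : Matrix.GeneralLinearGroup.det s = v * v := by
      apply Units.ext
      change Matrix.det (s : Matrix (Fin 2) (Fin 2) ℤ_[p]) = _
      rw [hs, Matrix.det_smul]
      simp [sq]
    refine ⟨h * ⟨s, hsI⟩, ?_⟩
    ext1
    · change (QuotientGroup.mk (h * ⟨s, hsI⟩) : I₁ ⧸ Z₁) = QuotientGroup.mk h
      exact QuotientGroup.mk_mul_of_mem h ((hZ₁ _).2 ⟨v, hv, hs⟩)
    · apply Subtype.ext
      change (Matrix.GeneralLinearGroup.det ((h : GL (Fin 2) ℤ_[p]) * s))⁻¹ = (γ : ℤ_[p]ˣ)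
      rw [map_mul, hsd, hvv]
      simp
  exact ⟨MulEquiv.ofBijective f ⟨hinj, hsurj⟩, fun g => ⟨rfl, rfl⟩⟩
end
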